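/- For each node v of the DFS tree T_G of a cactus graph G, there exists at most one cycle C(x,y) of T_G such that v lies on the path of C(x,y) and v is not the start node x. -/

import Mathlib

/-!
A non-start vertex of a vertical path has its parent on that path as well. Two cycles through `v`
that both start at proper ancestors of `v` therefore share the two vertices `v` and the parent of
`v`, so the cactus property forces them to coincide.
-/

open SimpleGraph

theorem support_subset_support_of_isAcyclic {V : Type*} {G : SimpleGraph V} (hG : G.IsAcyclic)
    {u v : V} {q : G.Walk u v} (hq : q.IsPath) (p : G.Walk u v) : q.support ⊆ p.support := by
  classical
  have hbypass : p.bypass = q :=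
    congrArg Subtype.val ((hG.subsingleton_path u v).elim p.toPath ⟨q, hq⟩)
  exact hbypass ▸ p.support_bypass_subset_support

/-- When `G` is a tree rooted at `r`, the vertex `q.penultimate` is the parent of `v`. -/
theorem penultimate_mem_support_of_isAcyclic {V : Type*} {G : SimpleGraph V} (hG : G.IsAcyclic)
    {r x y v : V} {q : G.Walk r v} (hq : q.IsPath) (hx : x ∈ q.support)
    {p : G.Walk x y} (hv : v ∈ p.support) (hvx : v ≠ x) : q.penultimate ∈ p.support := by
  classical
  have hx_reverse : x ∈ q.reverse.support := by simpa using hx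
  have hsnd : q.penultimate ∈ (q.reverse.takeUntil x hx_reverse).support := by
    rw [← q.snd_reverse, ← Walk.snd_takeUntil hvx.symm q.reverse hx_reverse]
    exact Walk.getVert_mem_support _ _
  have hsubset := support_subset_support_of_isAcyclic hG (hq.reverse.takeUntil hx_reverse)
    (p.takeUntil v hv).reverse
  have hmem : q.penultimate ∈ (p.takeUntil v hv).support := by simpa using hsubset hsnd
  exact p.support_takeUntil_subset_support hv hmem

theorem stmt_2_general {V : Type*} {T : SimpleGraph V} (hT : T.IsAcyclic) {r x y x' y' v : V}
    {q : T.Walk r v} (hq : q.IsPath) (hx : x ∈ q.support) (hx' : x' ∈ q.support)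
    {p : T.Walk x y} {p' : T.Walk x' y'}
    (hcactus : (x, y) ≠ (x', y') → {z | z ∈ p.support ∧ z ∈ p'.support}.Subsingleton)
    (hv : v ∈ p.support) (hv' : v ∈ p'.support) (hvx : v ≠ x) (hvx' : v ≠ x') :
    (x, y) = (x', y') := by
  by_contra hne
  have hparent : q.penultimate ∈ p.support :=
    penultimate_mem_support_of_isAcyclic hT hq hx hv hvx
  have hparent' : q.penultimate ∈ p'.support :=
    penultimate_mem_support_of_isAcyclic hT hq hx' hv' hvx'
  have hparent_eq : q.penultimate = v := hcactus hne ⟨hparent, hparent'⟩ ⟨hv, hv'⟩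
  have hnil : ¬ q.Nil := fun hnil ↦ by
    have hxr : x = r := by simpa [Walk.nil_iff_support_eq.mp hnil] using hx
    exact hvx (hnil.eq.symm.trans hxr.symm)
  exact (q.adj_penultimate hnil).ne hparent_eq

/-- For each node `v` of the DFS tree `T_G` of a cactus graph there is at most one cycle
`C(x,y)` (represented by its tree path `p` from start node `x` to end node `y`) that
contains `v` but where `v` is not the start node: any two such cycles coincide. -/
theorem stmt_2 {V : Type*} [Fintype V] [DecidableEq V] (T : SimpleGraph V)
    (hT : T.IsTree) (r : V) (x y x' y' v : V)
    (p : T.Path x y) (p' : T.Path x' y')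
    -- start nodes are ancestors of every vertex of their cycle path
    (hanc : ∀ z ∈ p.1.support, ∀ q : T.Path r z, x ∈ q.1.support)
    (hanc' : ∀ z ∈ p'.1.support, ∀ q : T.Path r z, x' ∈ q.1.support)
    -- cactus property: distinct cycles share at most one vertex
    (hcactus : (x, y) ≠ (x', y') →
      (p.1.support.toFinset ∩ p'.1.support.toFinset).card ≤ 1)
    (hv : v ∈ p.1.support) (hv' : v ∈ p'.1.support)
    (hvx : v ≠ x) (hvx' : v ≠ x') :
    (x, y) = (x', y') := by
  obtain ⟨q, hq⟩ := (hT.connected r v).exists_isPath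
  refine stmt_2_general hT.isAcyclic hq (hanc v hv ⟨q, hq⟩) (hanc' v hv' ⟨q, hq⟩)
    (fun hne ↦ ?_) hv hv' hvx hvx'
  simpa [Finset.card_le_one_iff_subsingleton, Set.inter_def] using hcactus hne
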